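/- Let A and B be real n×n matrices with A antisymmetric and B symmetric positive semi-definite, and let λ ≥ 0 be a real number. Then (−1)^{⌊n/2⌋} · pf [[−λA, B], [−B, A]] ≥ det B, where [[−λA, B], [−B, A]] denotes the 2n×2n block matrix with blocks −λA, B, −B, A. -/

import Mathlib

open Matrix BigOperators

/-- The pfaffian of a `2m × 2m` real matrix, via the symmetrized sum over all
permutations. -/
noncomputable def pf {m : ℕ} (C : Matrix (Fin (2 * m)) (Fin (2 * m)) ℝ) : ℝ :=
  (1 / (m.factorial * 2 ^ m) : ℝ) *
    ∑ π : Equiv.Perm (Fin (2 * m)),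
      ((Equiv.Perm.sign π : ℤ) : ℝ) *
        ∏ i : Fin m, C (π ⟨2 * i.val, by omega⟩) (π ⟨2 * i.val + 1, by omega⟩)

/-- The equivalence used to view a block `2n × 2n` matrix (indexed by `Fin n ⊕ Fin n`)
as a matrix indexed by `Fin (2 * n)`. -/
def blockIndex (n : ℕ) : (Fin n ⊕ Fin n) ≃ Fin (2 * n) :=
  finSumFinEquiv.trans (finCongr (by omega))


lemma one_le_det_one_add_mul_transpose {n : ℕ} (N : Matrix (Fin n) (Fin n) ℝ) :
    1 ≤ (1 + N * Nᵀ).det := by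
  have hP : (N * Nᵀ).PosSemidef := by
    simpa using posSemidef_self_mul_conjTranspose N
  have hH : (1 + N * Nᵀ).IsHermitian := by
    have := hP.1
    exact (isHermitian_one).add this
  rw [hH.det_eq_prod_eigenvalues]
  have : ∀ i, 1 ≤ hH.eigenvalues i := by
    intro i
    rw [hH.eigenvalues_eq i, add_mulVec, one_mulVec, dotProduct_add, map_add]
    have h1 := hP.re_dotProduct_nonneg (hH.eigenvectorBasis i)
    have h2 : RCLike.re (star (⇑(hH.eigenvectorBasis i)) ⬝ᵥ ⇑(hH.eigenvectorBasis i)) = (1:ℝ) := by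
      rw [dotProduct_comm, ← EuclideanSpace.inner_eq_star_dotProduct]
      rw [inner_self_eq_norm_sq_to_K, hH.eigenvectorBasis.orthonormal.1 i]
      simp
    linarith
  simp only [RCLike.ofReal_real_eq_id, id]
  calc (1:ℝ) = ∏ _i : Fin n, 1 := by simp
    _ ≤ _ := Finset.prod_le_prod (fun _ _ => zero_le_one) (fun i _ => this i)

lemma one_le_det_one_add {n : ℕ} (N : Matrix (Fin n) (Fin n) ℝ) (hN : Nᵀ = -N) :
    1 ≤ (1 + N).det := by
  have key : ∀ t : ℝ, 1 ≤ (1 + t • N).det ^ 2 := by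
    intro t
    have h := one_le_det_one_add_mul_transpose (t • N)
    have h2 : 1 + (t • N) * (t • N)ᵀ = (1 + t • N) * (1 + t • N)ᵀ := by
      simp [hN, mul_add, add_mul]
      abel
    rw [h2, det_mul, det_transpose, ← sq] at h
    exact h
  have hc : Continuous fun t : ℝ => (1 + t • N).det := by fun_prop
  have h1 := key 1
  rw [one_smul] at h1
  by_contra hlt
  push Not at hlt
  have hneg : (1 + N).det ≤ 0 := by
    by_contra hp
    push Not at hp
    nlinarith
  obtain ⟨t, -, ht⟩ := intermediate_value_Icc' (zero_le_one (α := ℝ)) hc.continuousOn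
    (show (0:ℝ) ∈ Set.Icc _ _ by simpa using hneg)
  have := key t
  simp only at ht
  rw [ht] at this
  norm_num at this

open scoped MatrixOrder in
lemma det_le_det_add_of_posDef {n : ℕ} (B M : Matrix (Fin n) (Fin n) ℝ) (hB : B.PosDef)
    (hM : Mᵀ = -M) : B.det ≤ (B + M).det := by
  obtain ⟨S, hS⟩ : ∃ S : Matrix (Fin n) (Fin n) ℝ, B = Sᵀ * S := by
    obtain ⟨y, hy⟩ := CStarAlgebra.nonneg_iff_eq_star_mul_self.mp hB.posSemidef.nonneg
    exact ⟨y, by simpa [star_eq_conjTranspose] using hy⟩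
  have hd : B.det ≠ 0 := hB.det_pos.ne'
  have hSd : IsUnit S.det := by
    rw [hS, det_mul, det_transpose] at hd
    exact isUnit_iff_ne_zero.2 (left_ne_zero_of_mul hd)
  have hSd' : IsUnit Sᵀ.det := by rwa [det_transpose]
  set N := (Sᵀ)⁻¹ * M * S⁻¹ with hNdef
  have hN : Nᵀ = -N := by
    rw [hNdef, transpose_mul, transpose_mul, hM, transpose_nonsing_inv, transpose_nonsing_inv,
      transpose_transpose]
    simp [mul_assoc]
  have hBM : B + M = Sᵀ * (1 + N) * S := by
    have : Sᵀ * N * S = M := by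
      rw [hNdef]
      calc Sᵀ * ((Sᵀ)⁻¹ * M * S⁻¹) * S = (Sᵀ * (Sᵀ)⁻¹) * M * (S⁻¹ * S) := by
            simp only [mul_assoc]
        _ = M := by rw [mul_nonsing_inv _ hSd', nonsing_inv_mul _ hSd]; simp
    rw [mul_add, add_mul, this, mul_one, hS]
  have h1 := one_le_det_one_add N hN
  rw [hBM, hS]
  simp only [det_mul, det_transpose]
  nlinarith [mul_self_nonneg S.det]

lemma det_le_det_add {n : ℕ} (B M : Matrix (Fin n) (Fin n) ℝ) (hB : B.PosSemidef)
    (hM : Mᵀ = -M) : B.det ≤ (B + M).det := by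
  have key : ∀ t : ℝ, 0 < t → (B + t • 1).det ≤ (B + t • 1 + M).det := fun t ht =>
    det_le_det_add_of_posDef _ _ (PosDef.posSemidef_add hB (PosDef.one.smul ht)) hM
  have c1 : Continuous fun t : ℝ => (B + t • 1).det := by fun_prop
  have c2 : Continuous fun t : ℝ => (B + t • 1 + M).det := by fun_prop
  have t1 := (c1.tendsto 0).mono_left (nhdsWithin_le_nhds (s := Set.Ioi 0))
  have t2 := (c2.tendsto 0).mono_left (nhdsWithin_le_nhds (s := Set.Ioi 0))
  have := le_of_tendsto_of_tendsto t1 t2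
    (Filter.eventually_of_mem self_mem_nhdsWithin fun t ht => key t ht)
  simpa using this

lemma prod_range_aux (b : ℕ) :
    ∏ i ∈ Finset.range (2 * b), (if i % 2 = 0 then (1 : ℤˣ) else -1) = (-1) ^ b := by
  induction b with
  | zero => simp
  | succ b ih =>
    rw [show 2 * (b + 1) = 2 * b + 1 + 1 by ring, Finset.prod_range_succ, Finset.prod_range_succ,
      ih, pow_succ]
    simp [Nat.add_mod]

lemma prod_range_aux2 (n : ℕ) :
    ∏ j ∈ Finset.range (2 * n), (if j % 2 = 0 then (-1 : ℤˣ) ^ (j / 2) else 1) = (-1) ^ (n / 2) := by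
  induction n with
  | zero => simp
  | succ b ih =>
    rw [show 2 * (b + 1) = 2 * b + 1 + 1 by ring, Finset.prod_range_succ, Finset.prod_range_succ,
      ih]
    have h1 : (2 * b + 1) % 2 = 1 := by omega
    have h2 : (2 * b) / 2 = b := by omega
    simp only [Nat.mul_mod_right, h1, h2, if_true, one_ne_zero, if_false, mul_one, ← pow_add]
    rcases Nat.even_or_odd' b with ⟨c, rfl | rfl⟩
    · rw [show 2 * c / 2 + 2 * c = c + 2 * c by omega, show (2 * c + 1) / 2 = c by omega,
        pow_add, pow_mul]
      simp
    · rw [show (2 * c + 1) / 2 + (2 * c + 1) = (c + 1) + 2 * c by omega,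
        show (2 * c + 1 + 1) / 2 = c + 1 by omega, pow_add _ _ (2 * c), pow_mul]
      simp

lemma sign_shuffle (n : ℕ) (τ : Equiv.Perm (Fin (2 * n)))
    (hτ : ∀ k, (τ k).val = if k.val % 2 = 0 then k.val / 2 else n + k.val / 2) :
    Equiv.Perm.sign τ = (-1) ^ (n / 2) := by
  rw [Equiv.Perm.sign_eq_prod_prod_Iio, ← prod_range_aux2,
    ← Fin.prod_univ_eq_prod_range (fun j => (if j % 2 = 0 then (-1 : ℤˣ) ^ (j / 2) else 1))]
  refine Finset.prod_congr rfl fun j _ => ?_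
  have : ∏ i ∈ Finset.Iio j, (if τ i < τ j then (1 : ℤˣ) else -1)
      = ∏ i ∈ Finset.range j.val, (if j.val % 2 = 0 then (if i % 2 = 0 then 1 else -1) else 1) := by
    refine Finset.prod_bij (fun i _ => i.val) ?_ ?_ ?_ ?_
    · intro a ha; simpa using ha
    · intro a _ b _ h; exact Fin.ext h
    · intro b hb
      have hb' : b < j.val := by simpa using hb
      exact ⟨⟨b, by omega⟩, by simpa [Fin.lt_def] using hb', rfl⟩
    · intro a ha
      have ha' : a.val < j.val := by simpa using ha
      have e1 := hτ a
      have e2 := hτ j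
      have := a.2
      have := j.2
      simp only [Fin.lt_def, e1, e2]
      split_ifs <;> first | rfl | omega
  rw [this]
  split_ifs with h
  · have := prod_range_aux (j.val / 2)
    rwa [show 2 * (j.val / 2) = j.val by omega] at this
  · simp

/-- Unnormalised pfaffian sum for an index type paired up by `e`. -/
noncomputable def pfSum {κ ι : Type} [Fintype κ] [Fintype ι] [DecidableEq ι]
    (e : κ × Bool ≃ ι) (C : Matrix ι ι ℝ) : ℝ :=
  ∑ π : Equiv.Perm ι, ((Equiv.Perm.sign π : ℤ) : ℝ) *
    ∏ i : κ, C (π (e (i, false))) (π (e (i, true)))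

/-- Pairs of values indexed by `κ` as maps on `ι`. -/
def pairEquiv {κ ι : Type} (e : κ × Bool ≃ ι) : (κ → ι × ι) ≃ (ι → ι) where
  toFun g x := cond (e.symm x).2 (g (e.symm x).1).2 (g (e.symm x).1).1
  invFun h i := (h (e (i, false)), h (e (i, true)))
  left_inv g := by ext i <;> simp
  right_inv h := by
    ext x
    obtain ⟨⟨i, b⟩, rfl⟩ := e.surjective x
    cases b <;> simp

lemma pfSum_congr {κ ι : Type} [Fintype κ] [DecidableEq κ] [Fintype ι] [DecidableEq ι]
    (e : κ × Bool ≃ ι) (P C : Matrix ι ι ℝ) :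
    pfSum e (P * C * Pᵀ) = P.det * pfSum e C := by
  have entry : ∀ a b, (P * C * Pᵀ) a b = ∑ x : ι × ι, C x.1 x.2 * (P a x.1 * P b x.2) := by
    intro a b
    rw [Fintype.sum_prod_type_right]
    simp only [mul_apply, transpose_apply, Finset.sum_mul]
    exact Finset.sum_congr rfl fun _ _ => Finset.sum_congr rfl fun _ _ => by ring
  have step1 : pfSum e (P * C * Pᵀ) = ∑ h : ι → ι,
      (∏ i : κ, C (h (e (i, false))) (h (e (i, true)))) * (P.submatrix id h).det := by
    unfold pfSum
    simp only [entry, Finset.prod_univ_sum, Fintype.piFinset_univ, Finset.mul_sum]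
    rw [Finset.sum_comm]
    refine Fintype.sum_equiv (pairEquiv e) _ _ fun g => ?_
    rw [det_apply', Finset.mul_sum]
    refine Finset.sum_congr rfl fun π _ => ?_
    rw [Finset.prod_mul_distrib, ← e.prod_comp, Fintype.prod_prod_type]
    simp only [pairEquiv, Fintype.prod_bool, Equiv.coe_fn_mk, Equiv.symm_apply_apply,
      submatrix_apply, id, cond_true, cond_false]
    simp only [mul_comm (P (π (e (_, true))) _)]
    ring
  rw [step1, pfSum, Finset.mul_sum]
  symm
  refine Fintype.sum_of_injective (fun π : Equiv.Perm ι => (π : ι → ι))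
    DFunLike.coe_injective _ _ ?_ ?_
  · intro h hh
    have hinj : ¬ Function.Injective h := fun hi =>
      hh ⟨Equiv.ofBijective h (Finite.injective_iff_bijective.1 hi), rfl⟩
    rw [Function.Injective] at hinj
    push Not at hinj
    obtain ⟨a, b, hab, hne⟩ := hinj
    rw [det_zero_of_column_eq hne (by intro k; simp [hab]), mul_zero]
  · intro π
    rw [det_permute']
    ring

lemma pfSum_trans {κ ι : Type} [Fintype κ] [Fintype ι] [DecidableEq ι]
    (e : κ × Bool ≃ ι) (ρ : Equiv.Perm ι) (C : Matrix ι ι ℝ) :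
    pfSum (e.trans ρ) C = ((Equiv.Perm.sign ρ : ℤ) : ℝ) * pfSum e C := by
  unfold pfSum
  rw [Finset.mul_sum]
  refine Fintype.sum_equiv (Equiv.mulRight ρ) _ _ fun π => ?_
  have : ((Equiv.Perm.sign ρ : ℤ) : ℝ) * ((Equiv.Perm.sign ρ : ℤ) : ℝ) = 1 := by
    rw [← Int.cast_mul, ← Units.val_mul, Int.units_mul_self]; simp
  simp only [Equiv.coe_mulRight, Equiv.Perm.sign_mul, Equiv.trans_apply, Equiv.Perm.mul_apply,
    Units.val_mul, Int.cast_mul]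
  linear_combination (-(((Equiv.Perm.sign π : ℤ) : ℝ) *
    ∏ i : κ, C (π (ρ (e (i, false)))) (π (ρ (e (i, true)))))) * this

lemma pfSum_equiv {κ ι ι' : Type} [Fintype κ] [Fintype ι] [DecidableEq ι]
    [Fintype ι'] [DecidableEq ι']
    (e : κ × Bool ≃ ι) (f : ι ≃ ι') (C : Matrix ι ι ℝ) :
    pfSum (e.trans f) (C.submatrix f.symm f.symm) = pfSum e C := by
  unfold pfSum
  symm
  refine Fintype.sum_equiv f.permCongr _ _ fun π => ?_
  simp [Equiv.permCongr_apply]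

/-- standard form on `κ × Bool` -/
def stdForm (κ : Type) [DecidableEq κ] : Matrix (κ × Bool) (κ × Bool) ℝ := fun x y =>
  if x.1 = y.1 then (if x.2 = y.2 then 0 else if x.2 then -1 else 1) else 0

/-- signed permutation -/
def hyper (κ : Type) (p : Equiv.Perm κ × (κ → Equiv.Perm Bool)) : Equiv.Perm (κ × Bool) :=
  (Equiv.prodCongrLeft fun _ => p.1) * (Equiv.prodCongrRight p.2)

lemma perm_bool_form (s : Equiv.Perm Bool) :
    (if s false = s true then (0:ℝ) else if s false then -1 else 1) =
      ((Equiv.Perm.sign s : ℤ) : ℝ) := by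
  have : ∀ s : Equiv.Perm Bool, (if s false = s true then (0:ℤ) else if s false then -1 else 1) =
      (Equiv.Perm.sign s : ℤ) := by decide
  rw [← this s]
  split_ifs <;> simp

lemma pfSum_std (κ : Type) [Fintype κ] [DecidableEq κ] :
    pfSum (Equiv.refl (κ × Bool)) (stdForm κ) =
      (Fintype.card κ).factorial * 2 ^ (Fintype.card κ) := by
  have hcard : ((Fintype.card κ).factorial * 2 ^ (Fintype.card κ) : ℝ) =
      ∑ p : Equiv.Perm κ × (κ → Equiv.Perm Bool), (1:ℝ) := by
    simp [Fintype.card_perm]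
  rw [hcard, pfSum]
  symm
  refine Fintype.sum_of_injective (hyper κ) ?_ _ _ ?_ ?_
  · rintro ⟨σ, s⟩ ⟨σ', s'⟩ h
    have h' : ∀ i b, (σ i, s i b) = (σ' i, s' i b) := by
      intro i b
      have := congrArg (fun f : Equiv.Perm (κ × Bool) => f (i, b)) h
      simpa [hyper] using this
    ext i
    · exact (Prod.ext_iff.1 (h' i true)).1
    · exact (Prod.ext_iff.1 (h' i _)).2
  · intro π hπ
    by_contra hne
    have hprod := right_ne_zero_of_mul hne
    rw [Finset.prod_ne_zero_iff] at hprod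
    simp only [Finset.mem_univ, true_imp_iff, Equiv.refl_apply, stdForm] at hprod
    have h1 : ∀ i, (π (i, false)).1 = (π (i, true)).1 := by
      intro i; by_contra h; exact hprod i (if_neg h)
    have h2 : ∀ i, (π (i, false)).2 ≠ (π (i, true)).2 := by
      intro i h; exact hprod i (by simp [h])
    have h1' : ∀ i b, (π (i, b)).1 = (π (i, true)).1 := by
      intro i b; cases b; exacts [h1 i, rfl]
    have hsurj : Function.Surjective fun i => (π (i, true)).1 := by
      intro k
      obtain ⟨⟨i, b⟩, hib⟩ := π.surjective (k, true)
      exact ⟨i, by simp only [← h1' i b, hib]⟩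
    have hbij : ∀ i, Function.Bijective fun b => (π (i, b)).2 := by
      intro i
      refine Finite.injective_iff_bijective.1 ?_
      intro b b' hb
      have := h2 i
      cases b <;> cases b' <;> simp_all
    apply hπ
    refine ⟨(Equiv.ofBijective _ (Finite.surjective_iff_bijective.1 hsurj),
      fun i => Equiv.ofBijective _ (hbij i)), ?_⟩
    ext ⟨i, b⟩ : 1
    simp [hyper, ← h1' i b]
  · rintro ⟨σ, s⟩
    have e1 : ∀ i b, hyper κ (σ, s) (i, b) = (σ i, s i b) := by
      intro i b; simp [hyper]
    simp only [Equiv.refl_apply, e1, stdForm, if_true, perm_bool_form]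
    have : Equiv.Perm.sign (hyper κ (σ, s)) = ∏ k, Equiv.Perm.sign (s k) := by
      rw [hyper, Equiv.Perm.sign_mul, Equiv.Perm.sign_prodCongrLeft,
        Equiv.Perm.sign_prodCongrRight]
      simp
    rw [this, Units.coe_prod, Int.cast_prod, ← Finset.prod_mul_distrib]
    symm
    refine Finset.prod_eq_one fun i _ => ?_
    rw [← Int.cast_mul, ← Units.val_mul, Int.units_mul_self]; simp

/-- interleaving -/
def interleave (n : ℕ) : Fin n × Bool ≃ Fin (2 * n) where
  toFun p := ⟨2 * p.1.val + cond p.2 1 0, by have := p.1.2; cases p.2 <;> simp <;> omega⟩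
  invFun k := (⟨k.val / 2, by omega⟩, decide (k.val % 2 = 1))
  left_inv p := by
    obtain ⟨i, b⟩ := p
    cases b <;> ext <;> simp <;> omega
  right_inv k := by
    ext
    rcases Nat.mod_two_eq_zero_or_one k.val with h | h <;> simp [h] <;> omega

/-- blocks -/
def pairSum (n : ℕ) : Fin n × Bool ≃ Fin n ⊕ Fin n :=
  (Equiv.prodComm _ _).trans (Equiv.boolProdEquivSum _)

lemma pf_eq_pfSum (n : ℕ) (C : Matrix (Fin n ⊕ Fin n) (Fin n ⊕ Fin n) ℝ) :
    pf (C.submatrix (blockIndex n).symm (blockIndex n).symm) =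
      (1 / (n.factorial * 2 ^ n) : ℝ) *
        pfSum ((interleave n).trans (blockIndex n).symm) C := by
  rw [← pfSum_equiv _ (blockIndex n)]
  have h : ((interleave n).trans (blockIndex n).symm).trans (blockIndex n) = interleave n := by
    ext x; simp
  rw [h]
  rfl

lemma sign_interleave (n : ℕ) :
    Equiv.Perm.sign ((pairSum n).symm.trans ((interleave n).trans (blockIndex n).symm)) =
      (-1) ^ (n / 2) := by
  rw [← Equiv.Perm.sign_permCongr (blockIndex n), ← Equiv.Perm.sign_inv]
  apply sign_shuffle
  intro k
  obtain ⟨⟨i, b⟩, rfl⟩ := (interleave n).surjective k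
  have : ((blockIndex n).permCongr ((pairSum n).symm.trans
      ((interleave n).trans (blockIndex n).symm)))⁻¹ (interleave n (i, b)) =
      blockIndex n (pairSum n (i, b)) := by
    rw [Equiv.Perm.inv_eq_iff_eq]
    simp [Equiv.permCongr_apply]
  rw [this]
  cases b
  · simp [interleave, pairSum, blockIndex, Equiv.boolProdEquivSum]
  · simp [interleave, pairSum, blockIndex, Equiv.boolProdEquivSum]
    omega

lemma pfSum_J (n : ℕ) :
    pfSum (pairSum n) (fromBlocks 0 1 (-1) 0) = n.factorial * 2 ^ n := by
  have h := pfSum_std (Fin n)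
  rw [← pfSum_equiv _ (pairSum n), Fintype.card_fin] at h
  rw [← h]
  congr 1
  ext (i | i) (j | j) <;>
    simp [pairSum, Equiv.boolProdEquivSum, stdForm, one_apply]
  split_ifs <;> simp

lemma pf_J (n : ℕ) :
    pf ((fromBlocks 0 1 (-1) 0 : Matrix (Fin n ⊕ Fin n) (Fin n ⊕ Fin n) ℝ).submatrix
      (blockIndex n).symm (blockIndex n).symm) = (-1) ^ (n / 2) := by
  have h : (interleave n).trans (blockIndex n).symm = (pairSum n).trans
      ((pairSum n).symm.trans ((interleave n).trans (blockIndex n).symm)) := by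
    ext x; simp
  rw [pf_eq_pfSum, h, pfSum_trans, sign_interleave, pfSum_J]
  have : (n.factorial : ℝ) ≠ 0 := by positivity
  push_cast
  field_simp

lemma pf_congr (n : ℕ) (P C : Matrix (Fin n ⊕ Fin n) (Fin n ⊕ Fin n) ℝ) :
    pf ((P * C * Pᵀ).submatrix (blockIndex n).symm (blockIndex n).symm) =
      P.det * pf (C.submatrix (blockIndex n).symm (blockIndex n).symm) := by
  rw [pf_eq_pfSum, pf_eq_pfSum, pfSum_congr]
  ring

lemma pf_lower (n : ℕ) (X Y : Matrix (Fin n) (Fin n) ℝ) (hY : Yᵀ = -Y) :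
    pf ((fromBlocks 0 X (-Xᵀ) Y).submatrix (blockIndex n).symm (blockIndex n).symm) =
      X.det * (-1) ^ (n / 2) := by
  have h1 : fromBlocks 0 X (-Xᵀ) Y =
      fromBlocks X 0 ((1/2 : ℝ) • Y) 1 * fromBlocks 0 1 (-1) 0 *
        (fromBlocks X 0 ((1/2 : ℝ) • Y) 1)ᵀ := by
    rw [fromBlocks_transpose, fromBlocks_multiply, fromBlocks_multiply]
    simp [hY, ← add_smul]
    norm_num
  rw [h1, pf_congr, pf_J, det_fromBlocks_zero₁₂, det_one, mul_one]

lemma pf_block (n : ℕ) (A B : Matrix (Fin n) (Fin n) ℝ)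
    (hA : Aᵀ = -A) (hB : Bᵀ = B) (s : ℝ) :
    pf ((fromBlocks (-((s * s) • A)) B (-B) A).submatrix
        (blockIndex n).symm (blockIndex n).symm) = (B + s • A).det * (-1) ^ (n / 2) := by
  rw [← pf_lower n _ A hA]
  have h1 : fromBlocks 0 (B + s • A) (-(B + s • A)ᵀ) A =
      fromBlocks 1 (s • 1) 0 1 * fromBlocks (-((s * s) • A)) B (-B) A *
        (fromBlocks 1 (s • 1) 0 1)ᵀ := by
    rw [fromBlocks_transpose, fromBlocks_multiply, fromBlocks_multiply]
    simp [hA, hB, smul_smul]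
    abel
  rw [h1, pf_congr, det_fromBlocks_zero₂₁]
  simp

theorem pfaffian_block_ge_det (n : ℕ) (A B : Matrix (Fin n) (Fin n) ℝ)
    (hA : Aᵀ = -A) (hBsymm : Bᵀ = B)
    (hBpsd : ∀ x : Fin n → ℝ, 0 ≤ x ⬝ᵥ B *ᵥ x)
    (l : ℝ) (hl : 0 ≤ l) :
    B.det ≤ (-1 : ℝ) ^ (n / 2) *
      pf ((Matrix.fromBlocks (-(l • A)) B (-B) A).submatrix
        (blockIndex n).symm (blockIndex n).symm) := by
  have hB : B.PosSemidef := by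
    refine PosSemidef.of_dotProduct_mulVec_nonneg ?_ ?_
    · simpa [IsHermitian] using hBsymm
    · intro x
      simpa using hBpsd x
  have h := pf_block n A B hA hBsymm (Real.sqrt l)
  rw [Real.mul_self_sqrt hl] at h
  rw [h]
  have h2 : ((-1 : ℝ) ^ (n / 2)) * (-1) ^ (n / 2) = 1 := by
    rw [← mul_pow]; simp
  have h3 := det_le_det_add B (Real.sqrt l • A) hB (by simp [hA])
  calc B.det ≤ (B + Real.sqrt l • A).det := h3
    _ = (B + Real.sqrt l • A).det * (((-1 : ℝ) ^ (n / 2)) * (-1) ^ (n / 2)) := by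
      rw [h2, mul_one]
    _ = _ := by ring
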